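/- Let R be an F_p-algebra and M an n×n matrix over R. Let R' be a strictly henselian local R-algebra with maximal ideal m and residue field κ. Then the map R'^n → R'^n, v ↦ v − M·φ(v) (where φ applies x ↦ x^p entrywise), restricts to a bijection m^n → m^n; consequently the induced map on kernels ker(1 − Mφ : R'^n → R'^n) → ker(1 − Mφ : κ^n → κ^n) is injective with image the reductions of solutions, and the map of fibers of 1 − Mφ over R' and over κ is an isomorphism. -/

import Mathlib

/-- The map `v ↦ v − M·φ(v)` on `A^n`, where `φ` is the entrywise `p`-th power. -/
def frobAffineMap (p n : ℕ) (A : Type*) [CommRing A] (M : Matrix (Fin n) (Fin n) A) :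
    (Fin n → A) → (Fin n → A) :=
  fun v => v - M.mulVec fun i => v i ^ p

/-!
The derivative of `x ↦ x ^ p` vanishes over the residue field `κ` of `R'`, so the Jacobian matrix of
the system `v - M·φ(v) = y` is the identity at every `κ`-point. Each solution over `κ` therefore
lies in an étale open part of the scheme of solutions, and by Hensel's lemma a `κ`-point of an étale
`R'`-algebra lifts to a section, uniquely because `R'` is local. The bijection on `m^n` is the case
of the `κ`-solution `0`.
-/

open MvPolynomial
open scoped TensorProduct
open IsLocalRing (ResidueField residue maximalIdeal residue_eq_zero_iff)

section Sections

variable {A B : Type*} [CommRing A] [CommRing B] [Algebra A B]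

-- The separability element `τ` is killed by every `1 ⊗ b - b ⊗ 1` and multiplies out to `1`, so its
-- image under `(s, t)` is a unit annihilating every `t b - s b`.
theorem algHom_eq_of_isLocalHom_comp_eq [Algebra.FormallyUnramified A B]
    [Algebra.EssFiniteType A B] {C D : Type*} [CommRing C] [Algebra A C] [CommRing D]
    (φ : C →+* D) [IsLocalHom φ] {s t : B →ₐ[A] C} (h : ∀ b, φ (s b) = φ (t b)) : s = t := by
  let τ := Algebra.FormallyUnramified.elem A B
  let st : B ⊗[A] B →ₐ[A] C := Algebra.TensorProduct.lift s t fun _ _ => .all _ _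
  have map_st : ∀ x, φ (st x) = φ (s (Algebra.TensorProduct.lmul' A x)) := fun x => by
    induction x with
    | zero => simp only [map_zero]
    | add x y hx hy => simp only [map_add, hx, hy]
    | tmul b c => simp [st, h]
  have isUnit_τ : IsUnit (st τ) := isUnit_of_map_unit φ _ <| by
    rw [map_st, Algebra.FormallyUnramified.lmul_elem, map_one, map_one]
    exact isUnit_one
  ext b
  have diff_mul_τ : (t b - s b) * st τ = 0 := by
    simpa [st] using congr(st $(Algebra.FormallyUnramified.one_tmul_sub_tmul_one_mul_elem
      (R := A) b))
  exact (sub_eq_zero.mp (isUnit_τ.mul_left_eq_zero.mp diff_mul_τ)).symm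

theorem exists_algHom_localizationAway {C : Type*} [CommRing C] [Algebra A C] {b : B}
    (g : B →ₐ[A] C) (hb : IsUnit (g b)) :
    ∃ g' : Localization.Away b →ₐ[A] C, ∀ x, g' (algebraMap B _ x) = g x :=
  ⟨IsLocalization.Away.liftAlgHom b hb, fun x => IsLocalization.Away.lift_eq b hb x⟩

variable [HenselianLocalRing A]

theorem exists_residue_comp_eq_of_isStandardEtale [Algebra.IsStandardEtale A B]
    (g : B →ₐ[A] ResidueField A) : ∃ s : B →ₐ[A] A, ∀ b, residue A (s b) = g b := by
  obtain ⟨P⟩ := Algebra.IsStandardEtale.nonempty_standardEtalePresentation (R := A) (S := B)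
  have hasMap_g := P.hasMap.map g
  have hensel : ∀ f : Polynomial A, f.Monic → ∀ a₀ : ResidueField A,
      Polynomial.aeval a₀ f = 0 → Polynomial.aeval a₀ (Polynomial.derivative f) ≠ 0 →
      ∃ a : A, f.IsRoot a ∧ residue A a = a₀ :=
    ((HenselianLocalRing.TFAE A).out 0 1 rfl rfl).mp inferInstance
  obtain ⟨a, root_a, residue_a⟩ := hensel P.f P.monic_f (g P.x) hasMap_g.1
    hasMap_g.isUnit_derivative_f.ne_zero
  have isUnit_g : IsUnit (Polynomial.aeval a P.g) := by
    refine isUnit_of_map_unit (residue A) _ ?_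
    rw [← IsLocalRing.ResidueField.algebraMap_eq, ← Polynomial.aeval_algebraMap_apply,
      IsLocalRing.ResidueField.algebraMap_eq, residue_a]
    exact hasMap_g.2
  have hasMap_a : P.HasMap a :=
    ⟨by rwa [Polynomial.coe_aeval_eq_eval], isUnit_g⟩
  let s : B →ₐ[A] A := (P.lift a hasMap_a).comp P.equivRing.toAlgHom
  have comp_s : (IsScalarTower.toAlgHom A A (ResidueField A)).comp s = g :=
    P.hom_ext (by simp [s, residue_a])
  exact ⟨s, fun b => congr($comp_s b)⟩

theorem exists_residue_comp_eq_of_etale [Algebra.Etale A B] (g : B →ₐ[A] ResidueField A) :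
    ∃ s : B →ₐ[A] A, ∀ b, residue A (s b) = g b := by
  have : (RingHom.ker g).IsPrime := RingHom.ker_isPrime _
  obtain ⟨b, hb, _⟩ := Algebra.IsEtaleAt.exists_isStandardEtale (R := A) (RingHom.ker g)
  obtain ⟨g', hg'⟩ := exists_algHom_localizationAway g (isUnit_iff_ne_zero.mpr hb)
  obtain ⟨s, hs⟩ := exists_residue_comp_eq_of_isStandardEtale g'
  exact ⟨s.comp (IsScalarTower.toAlgHom A B _), fun x => (hs _).trans (hg' x)⟩

theorem existsUnique_residue_comp_eq_of_etale_away {b : B}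
    [Algebra.Etale A (Localization.Away b)] (g : B →ₐ[A] ResidueField A) (hb : g b ≠ 0) :
    ∃! s : B →ₐ[A] A, ∀ x, residue A (s x) = g x := by
  obtain ⟨g', hg'⟩ := exists_algHom_localizationAway g (isUnit_iff_ne_zero.mpr hb)
  obtain ⟨s', hs'⟩ := exists_residue_comp_eq_of_etale g'
  refine ⟨s'.comp (IsScalarTower.toAlgHom A B _), fun x => (hs' _).trans (hg' x), fun t ht => ?_⟩
  have isUnit_t : IsUnit (t b) := isUnit_of_map_unit (residue A) _ <| by
    rwa [ht, isUnit_iff_ne_zero]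
  obtain ⟨t', ht'⟩ := exists_algHom_localizationAway t isUnit_t
  have residue_t' : (residue A).comp t'.toRingHom = (residue A).comp s'.toRingHom :=
    IsLocalization.ringHom_ext (Submonoid.powers b) <| RingHom.ext fun x => by
      simp [ht', ht, hs', hg']
  have t'_eq : t' = s' :=
    algHom_eq_of_isLocalHom_comp_eq (residue A) fun x => congr($residue_t' x)
  ext x
  simp [← ht', t'_eq]

end Sections

theorem isStandardSmoothOfRelativeDimension_localizationAway_jacobian {A B ι σ : Type*}
    [CommRing A] [CommRing B] [Algebra A B] [Finite ι] [Finite σ]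
    (P : Algebra.PreSubmersivePresentation A B ι σ) :
    Algebra.IsStandardSmoothOfRelativeDimension P.dimension A (Localization.Away P.jacobian) := by
  let L : Algebra.PreSubmersivePresentation B (Localization.Away P.jacobian) Unit Unit :=
    .localizationAway _ P.jacobian
  have isUnit_jacobian : IsUnit (algebraMap B (Localization.Away P.jacobian) P.jacobian) :=
    IsLocalization.Away.algebraMap_isUnit _
  have isUnit_jacobian_comp : IsUnit (L.comp P).jacobian := by
    rw [Algebra.PreSubmersivePresentation.comp_jacobian_eq_jacobian_smul_jacobian,
      Algebra.PreSubmersivePresentation.localizationAway_jacobian, Algebra.smul_def]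
    exact isUnit_jacobian.mul isUnit_jacobian
  have dimension_comp : (L.comp P).dimension = P.dimension := by
    rw [Algebra.PreSubmersivePresentation.dimension_comp_eq_dimension_add_dimension]
    simp [Algebra.Presentation.dimension]
  let Q : Algebra.SubmersivePresentation A (Localization.Away P.jacobian) (Unit ⊕ ι) (Unit ⊕ σ) :=
    { L.comp P with jacobian_isUnit := isUnit_jacobian_comp }
  exact Q.isStandardSmoothOfRelativeDimension dimension_comp

section Hensel

variable {A ι : Type*} [CommRing A]

/-- The algebra homomorphism `A[X] ⧸ (f) → C` corresponding to a common zero `v` of the polynomials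
`f` with coordinates in the `A`-algebra `C`. -/
noncomputable def homOfZero {C : Type*} [CommRing C] [Algebra A C] {f : ι → MvPolynomial ι A}
    (v : ι → C) (hv : ∀ i, aeval v (f i) = 0) :
    (MvPolynomial ι A ⧸ Ideal.span (Set.range f)) →ₐ[A] C :=
  Ideal.Quotient.liftₐ _ (aeval v) <| by
    change Ideal.span (Set.range f) ≤ RingHom.ker (aeval v)
    rw [Ideal.span_le]
    rintro _ ⟨i, rfl⟩
    exact hv i

theorem homOfZero_mk {C : Type*} [CommRing C] [Algebra A C] {f : ι → MvPolynomial ι A}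
    (v : ι → C) (hv : ∀ i, aeval v (f i) = 0) (q : MvPolynomial ι A) :
    homOfZero v hv (Ideal.Quotient.mk _ q) = aeval v q :=
  rfl

theorem existsUnique_zero_of_det_jacobian_ne_zero [HenselianLocalRing A] [Fintype ι]
    [DecidableEq ι] (f : ι → MvPolynomial ι A) (w : ι → ResidueField A)
    (hw : ∀ i, aeval w (f i) = 0)
    (hJ : (Matrix.of fun i j => aeval w (pderiv i (f j))).det ≠ 0) :
    ∃! v : ι → A, (∀ i, aeval v (f i) = 0) ∧ ∀ i, residue A (v i) = w i := by
  let P := Algebra.PreSubmersivePresentation.naive (v := f) id Function.injective_id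
  have : Algebra.IsStandardSmoothOfRelativeDimension 0 A (Localization.Away P.jacobian) :=
    Nat.sub_self (Nat.card ι) ▸ isStandardSmoothOfRelativeDimension_localizationAway_jacobian P
  have jacobian_ne_zero : homOfZero w hw P.jacobian ≠ 0 := by
    have jacobian_eq : P.jacobian = Ideal.Quotient.mk _ P.jacobiMatrix.det :=
      P.jacobian_eq_jacobiMatrix_det
    have aeval_jacobiMatrix : (aeval w).mapMatrix P.jacobiMatrix =
        Matrix.of fun i j => aeval w (pderiv i (f j)) := by
      ext i j
      simp [P]
    rwa [jacobian_eq, homOfZero_mk, AlgHom.map_det, aeval_jacobiMatrix]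
  obtain ⟨s, hs, s_unique⟩ :=
    existsUnique_residue_comp_eq_of_etale_away (homOfZero w hw) jacobian_ne_zero
  let v : ι → A := fun i => s (Ideal.Quotient.mk _ (X i))
  have aeval_v : ∀ q, aeval v q = s (Ideal.Quotient.mk _ q) := fun q =>
    congr($(aeval_unique (s.comp (Ideal.Quotient.mkₐ A (Ideal.span (Set.range f))))) q).symm
  refine ⟨v, ⟨fun i => ?_, fun i => ?_⟩, fun v' ⟨zero_v', residue_v'⟩ => ?_⟩
  · have mem_span : f i ∈ Ideal.span (Set.range f) := Ideal.subset_span (Set.mem_range_self i)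
    rw [aeval_v, Ideal.Quotient.eq_zero_iff_mem.mpr mem_span, map_zero]
  · rw [hs, homOfZero_mk, aeval_X]
  · have hom_v' : homOfZero v' zero_v' = s := s_unique _ fun x => by
      obtain ⟨q, rfl⟩ := Ideal.Quotient.mk_surjective x
      rw [homOfZero_mk, homOfZero_mk, ← funext residue_v']
      exact (aeval_algebraMap_apply (ResidueField A) v' q).symm
    ext i
    rw [← aeval_X (R := A) v' i, ← homOfZero_mk v' zero_v', hom_v']

end Hensel

section Frobenius

variable {p n : ℕ} {A : Type*} [CommRing A]

theorem frobAffineMap_apply (M : Matrix (Fin n) (Fin n) A) (v : Fin n → A) (i : Fin n) :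
    frobAffineMap p n A M v i = v i - ∑ j, M i j * v j ^ p :=
  rfl

theorem frobAffineMap_zero (hp : p ≠ 0) (M : Matrix (Fin n) (Fin n) A) :
    frobAffineMap p n A M 0 = 0 := by
  ext i
  simp [frobAffineMap_apply, hp]

theorem map_frobAffineMap {B : Type*} [CommRing B] (φ : A →+* B) (M : Matrix (Fin n) (Fin n) A)
    (v : Fin n → A) :
    (fun i => φ (frobAffineMap p n A M v i)) = frobAffineMap p n B (M.map φ) fun i => φ (v i) := by
  ext i
  simp [frobAffineMap_apply]

/-- The polynomials whose common zeros are the solutions `v` of `v - M·φ(v) = y`. -/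
noncomputable def frobFiberPoly (p : ℕ) (M : Matrix (Fin n) (Fin n) A) (y : Fin n → A)
    (i : Fin n) : MvPolynomial (Fin n) A :=
  X i - ∑ j, C (M i j) * X j ^ p - C (y i)

theorem aeval_frobFiberPoly {B : Type*} [CommRing B] [Algebra A B] (M : Matrix (Fin n) (Fin n) A)
    (y : Fin n → A) (v : Fin n → B) (i : Fin n) :
    aeval v (frobFiberPoly p M y i) =
      frobAffineMap p n B (M.map (algebraMap A B)) v i - algebraMap A B (y i) := by
  simp [frobFiberPoly, frobAffineMap_apply]

theorem jacobian_frobFiberPoly {B : Type*} [CommRing B] [Algebra A B] (hp : (p : B) = 0)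
    (M : Matrix (Fin n) (Fin n) A) (y : Fin n → A) (v : Fin n → B) :
    (Matrix.of fun i j => aeval v (pderiv i (frobFiberPoly p M y j))) = 1 := by
  ext i j
  simp [frobFiberPoly, Derivation.leibniz_pow, hp, Matrix.one_apply, Pi.single_apply, pderiv_X,
    eq_comm]

variable [HenselianLocalRing A]

theorem existsUnique_frobAffineMap_eq (hp : (p : ResidueField A) = 0)
    (M : Matrix (Fin n) (Fin n) A) (y : Fin n → A) (w : Fin n → ResidueField A)
    (hw : frobAffineMap p n (ResidueField A) (M.map (residue A)) w = fun i => residue A (y i)) :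
    ∃! v : Fin n → A, frobAffineMap p n A M v = y ∧ ∀ i, residue A (v i) = w i := by
  have zero_w : ∀ i, aeval w (frobFiberPoly p M y i) = 0 := fun i => by
    rw [aeval_frobFiberPoly, sub_eq_zero]
    exact congrFun hw i
  have zero_iff : ∀ v : Fin n → A,
      (∀ i, aeval v (frobFiberPoly p M y i) = 0) ↔ frobAffineMap p n A M v = y := fun v => by
    simp [aeval_frobFiberPoly, sub_eq_zero, funext_iff]
  simp only [← zero_iff]
  refine existsUnique_zero_of_det_jacobian_ne_zero _ w zero_w ?_
  rw [jacobian_frobFiberPoly hp, Matrix.det_one]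
  exact one_ne_zero

theorem bijOn_frobAffineMap_maximalIdeal (hp₀ : p ≠ 0) (hp : (p : ResidueField A) = 0)
    (M : Matrix (Fin n) (Fin n) A) :
    Set.BijOn (frobAffineMap p n A M) {v | ∀ i, v i ∈ maximalIdeal A}
      {v | ∀ i, v i ∈ maximalIdeal A} := by
  have map_zero_eq : frobAffineMap p n (ResidueField A) (M.map (residue A)) 0 = 0 :=
    frobAffineMap_zero hp₀ _
  simp only [← residue_eq_zero_iff]
  have mapsTo : Set.MapsTo (frobAffineMap p n A M) {v | ∀ i, residue A (v i) = 0}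
      {v | ∀ i, residue A (v i) = 0} := fun v hv => congrFun <| by
    rw [map_frobAffineMap, funext hv]
    exact map_zero_eq
  have fiber : ∀ y : Fin n → A, (∀ i, residue A (y i) = 0) →
      ∃! v, frobAffineMap p n A M v = y ∧ ∀ i, residue A (v i) = 0 := fun y hy =>
    existsUnique_frobAffineMap_eq hp M y 0 (map_zero_eq.trans (funext hy).symm)
  refine ⟨mapsTo, fun v hv v' hv' h => ?_, fun y hy => ?_⟩
  · exact (fiber _ (mapsTo hv')).unique ⟨h, hv⟩ ⟨rfl, hv'⟩
  · obtain ⟨v, ⟨hvy, hv⟩, -⟩ := fiber y hy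
    exact ⟨v, hv, hvy⟩

theorem stmt16_general (hp₀ : p ≠ 0) (hp : (p : ResidueField A) = 0)
    (M : Matrix (Fin n) (Fin n) A) :
    Set.BijOn (frobAffineMap p n A M) {v | ∀ i, v i ∈ maximalIdeal A}
      {v | ∀ i, v i ∈ maximalIdeal A} ∧
    ∀ (y : Fin n → A) (w : Fin n → ResidueField A),
      frobAffineMap p n (ResidueField A) (M.map (residue A)) w = (fun i => residue A (y i)) →
      ∃! v : Fin n → A, frobAffineMap p n A M v = y ∧ ∀ i, residue A (v i) = w i :=
  ⟨bijOn_frobAffineMap_maximalIdeal hp₀ hp M, existsUnique_frobAffineMap_eq hp M⟩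

end Frobenius

/-- Let `R` be an `F_p`-algebra and `M` an `n×n` matrix over `R`.  Let `R'`
be a strictly henselian local `R`-algebra with maximal ideal `m` and residue field `κ`.
Then `v ↦ v − M·φ(v)` restricts to a bijection `m^n → m^n`; consequently the map of fibers
of `1 − Mφ` over `R'` and over `κ` is an isomorphism: for every `y ∈ R'^n` and every
solution `w` of `(1 − Mφ)(w) = ȳ` over `κ`, there is a unique `v ∈ R'^n` with
`(1 − Mφ)(v) = y` lifting `w`.  (Taking `y = 0` this gives the bijection of kernels.) -/
theorem stmt16 (p n : ℕ) [Fact p.Prime] (R : Type*) [CommRing R] [CharP R p]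
    (R' : Type*) [CommRing R'] [Algebra R R'] [HenselianLocalRing R']
    [IsSepClosed (IsLocalRing.ResidueField R')]
    (M : Matrix (Fin n) (Fin n) R) :
    Set.BijOn (frobAffineMap p n R' (M.map (algebraMap R R')))
      {v : Fin n → R' | ∀ i, v i ∈ IsLocalRing.maximalIdeal R'}
      {v : Fin n → R' | ∀ i, v i ∈ IsLocalRing.maximalIdeal R'} ∧
    (∀ (y : Fin n → R') (w : Fin n → IsLocalRing.ResidueField R'),
      frobAffineMap p n (IsLocalRing.ResidueField R')
          (M.map ((IsLocalRing.residue R').comp (algebraMap R R'))) w =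
        (fun i => IsLocalRing.residue R' (y i)) →
      ∃! v : Fin n → R', frobAffineMap p n R' (M.map (algebraMap R R')) v = y ∧
        ∀ i, IsLocalRing.residue R' (v i) = w i) :=
  stmt16_general (Fact.out : p.Prime).ne_zero
    (by rw [← map_natCast ((residue R').comp (algebraMap R R')), CharP.cast_eq_zero, map_zero])
    (M.map (algebraMap R R'))
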